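/- arXiv:2306.00654 — 3 statements merged into one kernel-verified Lean document; each statement's English description precedes it below -/
import Mathlib

section
/- Let 1 ≤ k ≤ d. Then the minimum of Σ_{j,j'=1}^k |⟨v_j, conj(v_{j'})⟩|² over all orthonormal subsets {v_1, …, v_k} of ℂ^d equals max(2k − d, 0). That is: (i) for every orthonormal subset {v_1,…,v_k} ⊂ ℂ^d one has Σ_{j,j'=1}^k |⟨v_j, conj(v_{j'})⟩|² ≥ max(2k − d, 0), and (ii) there exists an orthonormal subset attaining equality. -/
open Matrix
open scoped ComplexOrder

noncomputable section

/-- The ampliation `id_{M_k} ⊗ L` of a map `L` applied to a bipartite matrix, blockwise. -/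
def idTensor {k m n : ℕ} (L : Matrix (Fin m) (Fin m) ℂ →ₗ[ℂ] Matrix (Fin n) (Fin n) ℂ)
    (X : Matrix (Fin k × Fin m) (Fin k × Fin m) ℂ) : Matrix (Fin k × Fin n) (Fin k × Fin n) ℂ :=
  Matrix.of fun p q => L (Matrix.of fun a b => X (p.1, a) (q.1, b)) p.2 q.2

/-- `L` is `k`-positive if `id_{M_k} ⊗ L` sends positive semidefinite matrices to positive
semidefinite matrices. -/
def IsKPositive {m n : ℕ} (k : ℕ)
    (L : Matrix (Fin m) (Fin m) ℂ →ₗ[ℂ] Matrix (Fin n) (Fin n) ℂ) : Prop :=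
  ∀ X : Matrix (Fin k × Fin m) (Fin k × Fin m) ℂ, X.PosSemidef → (idTensor L X).PosSemidef

/-- The linear map `L^{(d)}_{p,q}(Z) = (1-p-q) (Tr Z / d) I_d + p Z + q Zᵀ`. -/
def Lmap (d : ℕ) (p q : ℝ) :
    Matrix (Fin d) (Fin d) ℂ →ₗ[ℂ] Matrix (Fin d) (Fin d) ℂ :=
  ((((1 - p - q : ℝ) : ℂ) / (d : ℂ)) •
      (Matrix.traceLinearMap (Fin d) ℂ ℂ).smulRight (1 : Matrix (Fin d) (Fin d) ℂ))
    + ((p : ℝ) : ℂ) • LinearMap.id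
    + ((q : ℝ) : ℂ) • (Matrix.transposeLinearEquiv (Fin d) (Fin d) ℂ ℂ).toLinearMap

/-- The maximally entangled vector `|Ω_d⟩ = (1/√d) ∑_j |jj⟩`. -/
def omegaVec (d : ℕ) : Fin d × Fin d → ℂ :=
  fun p => if p.1 = p.2 then ((1 / Real.sqrt d : ℝ) : ℂ) else 0

/-- The flip operator `F_d = ∑_{i,j} |ij⟩⟨ji|`. -/
def flipMatrix (d : ℕ) : Matrix (Fin d × Fin d) (Fin d × Fin d) ℂ :=
  Matrix.of fun p q => if p.1 = q.2 ∧ p.2 = q.1 then 1 else 0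

/-- The orthogonally invariant operators
`ρ^{(d)}_{a,b} = ((1-a-b)/d²) I + a |Ω_d⟩⟨Ω_d| + (b/d) F_d`. -/
def rho (d : ℕ) (a b : ℝ) : Matrix (Fin d × Fin d) (Fin d × Fin d) ℂ :=
  ((((1 - a - b : ℝ) : ℂ) / ((d : ℂ) ^ 2)) • (1 : Matrix (Fin d × Fin d) (Fin d × Fin d) ℂ))
    + (((a : ℝ) : ℂ) • Matrix.vecMulVec (omegaVec d) (star (omegaVec d)))
    + ((((b : ℝ) : ℂ) / (d : ℂ)) • flipMatrix d)

/-- `Sch_k`: finite sums of rank-one operators `|ξ⟩⟨ξ|` with Schmidt rank `SR(ξ) ≤ k`,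
where `SR(ξ)` is the rank of the `d_A × d_B` coefficient matrix of `ξ ∈ ℂ^{d_A} ⊗ ℂ^{d_B}`. -/
def SchmidtSet (dA dB k : ℕ) : Set (Matrix (Fin dA × Fin dB) (Fin dA × Fin dB) ℂ) :=
  {X | ∃ (N : ℕ) (ξ : Fin N → (Fin dA × Fin dB → ℂ)),
    (∀ i, (Matrix.of fun a b => ξ i (a, b)).rank ≤ k) ∧
    X = ∑ i, Matrix.vecMulVec (ξ i) (star (ξ i))}

/-!
Let `v` and `w` be orthonormal families, and let the weight of a vector `x` be `∑ i, |⟨v i, x⟩|²`.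
Extend `w` to an orthonormal basis. By Bessel each basis vector has weight at most `1`, and by
Parseval the weights add up to `|v|`. So the missing weights `1 - weight` are nonnegative with sum
`dim - |v|`, which bounds their sum `|w| - overlap` over the vectors of `w`. For the lower bound,
take the conjugates of `v` as `w`.

Equality is attained by using as many isotropic vectors `(e + I e') / √2` as there is room for:
they are orthogonal to all the conjugates, so only the remaining vectors, which are real,
contribute, with overlap `1` each.
-/

section LowerBound

variable {𝕜 ι n : Type*} [RCLike 𝕜] [Fintype n]

theorem card_add_card_le_finrank_add_sum_norm_inner_sq {E κ : Type*} [NormedAddCommGroup E]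
    [InnerProductSpace 𝕜 E] [FiniteDimensional 𝕜 E] [Fintype ι] [Fintype κ] {v : ι → E} {w : κ → E}
    (hv : Orthonormal 𝕜 v) (hw : Orthonormal 𝕜 w) :
    (Fintype.card ι + Fintype.card κ : ℝ) ≤
      Module.finrank 𝕜 E + ∑ i, ∑ j, ‖inner 𝕜 (v i) (w j)‖ ^ 2 := by
  classical
  obtain ⟨u, b, hwu, hb⟩ := hw.toSubtypeRange.exists_orthonormalBasis_extension
  let weight (x : E) : ℝ := ∑ i, ‖inner 𝕜 (v i) x‖ ^ 2
  have weight_basis_le_one (x : u) : weight (b x) ≤ 1 := by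
    simpa using hv.sum_inner_products_le (b x) (s := Finset.univ)
  have sum_weight_basis : ∑ x, weight (b x) = Fintype.card ι := by
    rw [Finset.sum_comm]
    simp only [b.sum_sq_norm_inner_left, hv.1, one_pow, Finset.sum_const, Finset.card_univ,
      nsmul_one]
  have card_basis : Fintype.card u = Module.finrank 𝕜 E :=
    (Module.finrank_eq_card_basis b.toBasis).symm
  let f : κ ↪ u := ⟨fun j => ⟨w j, hwu ⟨j, rfl⟩⟩, fun _ _ h =>
    hw.linearIndependent.injective (congrArg Subtype.val h)⟩
  have basis_f (j : κ) : b (f j) = w j := congrFun hb (f j)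
  have missing_weight_le : ∑ j, (1 - weight (w j)) ≤ ∑ x, (1 - weight (b x)) := by
    simp only [← basis_f]
    rw [← Finset.sum_map Finset.univ f fun x => 1 - weight (b x)]
    exact Finset.sum_le_univ_sum_of_nonneg fun x => sub_nonneg.2 (weight_basis_le_one x)
  have sum_weight_w : ∑ j, weight (w j) = ∑ i, ∑ j, ‖inner 𝕜 (v i) (w j)‖ ^ 2 := Finset.sum_comm
  simp only [Finset.sum_sub_distrib, Finset.sum_const, Finset.card_univ, nsmul_one, card_basis,
    sum_weight_basis, sum_weight_w] at missing_weight_le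
  linarith

theorem orthonormal_toLp_iff [DecidableEq ι] {v : ι → n → 𝕜} :
    Orthonormal 𝕜 (fun i => WithLp.toLp 2 (v i)) ↔
      ∀ i j, star (v i) ⬝ᵥ v j = if i = j then 1 else 0 := by
  simp only [orthonormal_iff_ite, EuclideanSpace.inner_toLp_toLp, dotProduct_comm]

theorem star_dotProduct_star_eq_ite {R : Type*} [CommSemiring R] [StarRing R] [DecidableEq ι]
    {v : ι → n → R} (hv : ∀ i j, star (v i) ⬝ᵥ v j = if i = j then 1 else 0) (i j : ι) :
    star (star (v i)) ⬝ᵥ star (v j) = if i = j then 1 else 0 := by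
  rw [star_star, dotProduct_comm, hv]
  simp only [eq_comm]

theorem two_mul_card_sub_card_le_sum_normSq_star_dotProduct_star [Fintype ι] [DecidableEq ι]
    {v : ι → n → ℂ} (hv : ∀ i j, star (v i) ⬝ᵥ v j = if i = j then 1 else 0) :
    2 * (Fintype.card ι : ℝ) - Fintype.card n ≤
      ∑ i, ∑ j, Complex.normSq (star (v i) ⬝ᵥ star (v j)) := by
  have card_le := card_add_card_le_finrank_add_sum_norm_inner_sq (orthonormal_toLp_iff.2 hv)
    (orthonormal_toLp_iff.2 (star_dotProduct_star_eq_ite hv))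
  simp only [EuclideanSpace.inner_toLp_toLp, finrank_euclideanSpace, ← Complex.normSq_eq_norm_sq]
    at card_le
  rw [Finset.sum_comm]
  linarith

end LowerBound

section PairedFamily

variable {α β n : Type*} [DecidableEq n]

/-- The vectors `(e_a + z e_{a'}) / √2` for `a : α`, together with the basis vectors `e_b` for
`b : β`, where `f` chooses pairwise distinct coordinates `a`, `a'` and `b`. Those of the first kind
are isotropic when `z = ± I`; keeping `z` as a parameter turns conjugation of the family into
conjugation of `z`. -/
def pairedFamily (f : (α ⊕ α) ⊕ β ↪ n) (z : ℂ) : α ⊕ β → n → ℂ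
  | .inl a => (√2 : ℂ)⁻¹ • (Pi.single (f (.inl (.inl a))) 1 + Pi.single (f (.inl (.inr a))) z)
  | .inr b => Pi.single (f (.inr b)) 1

theorem star_pairedFamily (f : (α ⊕ α) ⊕ β ↪ n) (z : ℂ) (i : α ⊕ β) :
    star (pairedFamily f z i) = pairedFamily f (star z) i := by
  cases i <;> simp [pairedFamily]

theorem pairedFamily_dotProduct_pairedFamily [Fintype n] [DecidableEq α] [DecidableEq β]
    (f : (α ⊕ α) ⊕ β ↪ n) (z w : ℂ) (i j : α ⊕ β) :
    pairedFamily f z i ⬝ᵥ pairedFamily f w j =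
      if i = j then Sum.elim (fun _ => (1 + z * w) / 2) (fun _ => 1) i else 0 := by
  have inv_sqrt_two_sq : (√2 : ℂ)⁻¹ * (√2 : ℂ)⁻¹ = 1 / 2 := by
    rw [← mul_inv, ← Complex.ofReal_mul, Real.mul_self_sqrt zero_le_two]
    norm_num
  rcases i with a | b <;> rcases j with a' | b'
  · obtain rfl | h := eq_or_ne a a'
    · simp only [pairedFamily, smul_add, dotProduct_add, dotProduct_smul, dotProduct_single,
        Pi.add_apply, Pi.smul_apply, Pi.single_eq_same, smul_eq_mul, mul_one, ne_eq,
        EmbeddingLike.apply_eq_iff_eq, Sum.inl.injEq, reduceCtorEq, not_false_eq_true,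
        Pi.single_eq_of_ne, mul_zero, add_zero, zero_add, ↓reduceIte, Sum.elim_inl]
      linear_combination (1 + z * w) * inv_sqrt_two_sq
    · simp [pairedFamily, h]
  all_goals simp [pairedFamily, Pi.single_apply, eq_comm]

end PairedFamily

theorem exists_orthonormal_sum_normSq_star_dotProduct_star_eq {ι n : Type*} [Fintype ι]
    [DecidableEq ι] [Fintype n] (h : Fintype.card ι ≤ Fintype.card n) :
    ∃ v : ι → n → ℂ, (∀ i j, star (v i) ⬝ᵥ v j = if i = j then 1 else 0) ∧
      ∑ i, ∑ j, Complex.normSq (star (v i) ⬝ᵥ star (v j)) =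
        (2 * Fintype.card ι - Fintype.card n : ℕ) := by
  classical
  let α := Fin (min (Fintype.card ι) (Fintype.card n - Fintype.card ι))
  let β := Fin (2 * Fintype.card ι - Fintype.card n)
  obtain ⟨e⟩ : Nonempty (ι ≃ α ⊕ β) := Fintype.card_eq.1 <| by
    simp only [α, β, Fintype.card_sum, Fintype.card_fin]
    omega
  obtain ⟨f⟩ : Nonempty ((α ⊕ α) ⊕ β ↪ n) := Function.Embedding.nonempty_of_card_le <| by
    simp only [α, β, Fintype.card_sum, Fintype.card_fin]
    omega
  let v (i : ι) : n → ℂ := pairedFamily f Complex.I (e i)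
  have orthonormal_v (i j : ι) : star (v i) ⬝ᵥ v j = if i = j then 1 else 0 := by
    simp [v, star_pairedFamily, pairedFamily_dotProduct_pairedFamily]
  have overlap_v (i j : ι) :
      star (v i) ⬝ᵥ star (v j) = if i = j then Sum.elim (fun _ => 0) (fun _ => 1) (e i) else 0 := by
    simp [v, star_pairedFamily, pairedFamily_dotProduct_pairedFamily]
  refine ⟨v, orthonormal_v, ?_⟩
  calc ∑ i, ∑ j, Complex.normSq (star (v i) ⬝ᵥ star (v j))
      = ∑ i, Complex.normSq (Sum.elim (fun _ => 0) (fun _ => 1) (e i)) := by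
        simp [overlap_v, apply_ite Complex.normSq]
    _ = ∑ x : α ⊕ β, Complex.normSq (Sum.elim (fun _ => 0) (fun _ => 1) x) :=
        e.sum_comp fun x => Complex.normSq (Sum.elim (fun _ => 0) (fun _ => 1) x)
    _ = (2 * Fintype.card ι - Fintype.card n : ℕ) := by simp [β]

theorem natCast_tsub_eq_max {R : Type*} [Ring R] [LinearOrder R] [IsStrictOrderedRing R]
    (a b : ℕ) : ((a - b : ℕ) : R) = max (a - b : R) 0 := by
  rw [← sub_self (b : R), max_sub_sub_right, ← Nat.cast_max, ← tsub_add_eq_max, Nat.cast_add,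
    add_sub_cancel_right]

theorem min_conjugate_overlap_general {ι n : Type*} [Fintype ι] [Fintype n] [DecidableEq ι]
    (h : Fintype.card ι ≤ Fintype.card n) :
    IsLeast {s : ℝ | ∃ v : ι → n → ℂ,
        (∀ i j, star (v i) ⬝ᵥ v j = if i = j then 1 else 0) ∧
        s = ∑ i, ∑ j, Complex.normSq (star (v i) ⬝ᵥ star (v j))}
      (max (2 * (Fintype.card ι : ℝ) - Fintype.card n) 0) := by
  constructor
  · obtain ⟨v, orthonormal_v, sum_v⟩ := exists_orthonormal_sum_normSq_star_dotProduct_star_eq h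
    refine ⟨v, orthonormal_v, ?_⟩
    rw [sum_v, natCast_tsub_eq_max, Nat.cast_mul, Nat.cast_ofNat]
  · rintro _ ⟨v, orthonormal_v, rfl⟩
    exact max_le (two_mul_card_sub_card_le_sum_normSq_star_dotProduct_star orthonormal_v)
      (Finset.sum_nonneg fun _ _ => Finset.sum_nonneg fun _ _ => Complex.normSq_nonneg _)

/-- For `1 ≤ k ≤ d`, the minimum of `∑_{j,j'} |⟨v_j, conj(v_{j'})⟩|²` over
all orthonormal subsets `{v_1,…,v_k} ⊆ ℂ^d` equals `max (2k - d) 0`. -/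
theorem min_conjugate_overlap {d k : ℕ} (hk : 1 ≤ k) (hkd : k ≤ d) :
    IsLeast {s : ℝ | ∃ v : Fin k → (Fin d → ℂ),
        (∀ i j, star (v i) ⬝ᵥ v j = if i = j then 1 else 0) ∧
        s = ∑ j : Fin k, ∑ j' : Fin k, Complex.normSq (star (v j) ⬝ᵥ star (v j'))}
      (max (2 * (k : ℝ) - (d : ℝ)) 0) := by
  simpa only [Fintype.card_fin] using
    min_conjugate_overlap_general (ι := Fin k) (n := Fin d) (by simpa only [Fintype.card_fin])

end
end

section
/- Let d ≥ 4 and let k be an integer with 1 < k ≤ d/2, and p, q ∈ ℝ. The map L^{(d)}_{p,q} is k-positive if and only if p − (d−1)q ≤ 1, p + (d+1)q ≤ 1, (kd−1)p + (d−1)q ≥ −1, and q − (kd−1)p ≤ 1. -/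
open Matrix
open scoped ComplexOrder

noncomputable section

/-!
By the spectral decomposition of positive semidefinite matrices, `L` is `k`-positive iff the form
`Q(W) = c ‖W‖² + p |tr W|² + q tr(W W̄)`, with `c = (1 - p - q) / d` and the Frobenius norm, is
nonnegative on all matrices `W` of rank at most `k`. For such `W`, put `n = ‖W‖²`, `m = tr(W W̄)` and
`t = |tr W|²`. Expanding `‖W ± Wᵀ‖² ≥ 0` gives `|m| ≤ n`, and the inequality
`|tr X|² ≤ rank X · ‖X‖²`, applied to `X = W` and to `X = W + Wᵀ` (of rank at most `2k`), gives
`t ≤ k n` and `t ≤ k (n + m)`. The cone of `(n, m, t)` cut out by these bounds and `t ≥ 0` has the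
extreme rays `(1, 1, 0)`, `(1, -1, 0)`, `(1, 1, k)` and `(1, 0, k)`. Up to scaling they are attained
by `E_ij + E_ji`, by `E_ij - E_ji`, by a real projection of rank `k`, and by the projection onto a
`k`-dimensional subspace isotropic for the bilinear form `xᵀ y`, which exists because `2k ≤ d`.
Nonnegativity of `Q` on the four rays is the four inequalities.
-/

section Frobenius

open scoped Matrix.Norms.Frobenius InnerProductSpace

variable {m n 𝕜 : Type*} [Fintype m] [Fintype n] [RCLike 𝕜]

theorem frobenius_norm_sq_eq_sum (A : Matrix m n 𝕜) : ‖A‖ ^ 2 = ∑ i, ∑ j, ‖A i j‖ ^ 2 := by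
  rw [frobenius_norm_def, ← Real.sqrt_eq_rpow, Real.sq_sqrt (by positivity)]
  simp only [Real.rpow_two]

theorem trace_mul_conjTranspose_self_eq (A : Matrix m n 𝕜) :
    (A * Aᴴ).trace = ((‖A‖ ^ 2 : ℝ) : 𝕜) := by
  simp only [trace, diag_apply, mul_apply, conjTranspose_apply, frobenius_norm_sq_eq_sum,
    RCLike.ofReal_sum, RCLike.ofReal_pow, RCLike.star_def, RCLike.mul_conj]

theorem sum_norm_toEuclideanLin_sq_le [DecidableEq n] {ι : Type*} [Fintype ι] (A : Matrix m n 𝕜)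
    {v : ι → EuclideanSpace 𝕜 n} (hv : Orthonormal 𝕜 v) :
    ∑ i, ‖toEuclideanLin A (v i)‖ ^ 2 ≤ ‖A‖ ^ 2 := by
  let row (a : m) : EuclideanSpace 𝕜 n := WithLp.toLp 2 (star (A a))
  have entry_eq_inner (i : ι) (a : m) : ‖toEuclideanLin A (v i) a‖ = ‖⟪v i, row a⟫_𝕜‖ := by
    rw [norm_inner_symm]
    simp [row, EuclideanSpace.inner_eq_star_dotProduct, mulVec, dotProduct_comm]
  calc ∑ i, ‖toEuclideanLin A (v i)‖ ^ 2
      = ∑ a, ∑ i, ‖⟪v i, row a⟫_𝕜‖ ^ 2 := by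
        simp only [EuclideanSpace.norm_sq_eq, entry_eq_inner]
        exact Finset.sum_comm
    _ ≤ ∑ a, ‖row a‖ ^ 2 := Finset.sum_le_sum fun a _ => hv.sum_inner_products_le (row a)
    _ = ‖A‖ ^ 2 := by simp [row, EuclideanSpace.norm_sq_eq, frobenius_norm_sq_eq_sum]

theorem norm_trace_sq_le_rank_mul_norm_sq (A : Matrix n n 𝕜) :
    ‖A.trace‖ ^ 2 ≤ A.rank * ‖A‖ ^ 2 := by
  classical
  let T := toEuclideanLin A
  let K := LinearMap.range T
  let b := stdOrthonormalBasis 𝕜 K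
  have hb : Orthonormal 𝕜 fun i => (b i : EuclideanSpace 𝕜 n) :=
    b.orthonormal.comp_linearIsometry K.subtypeₗᵢ
  let e := (EuclideanSpace.basisFun n 𝕜).toBasis
  have T_eq : T = toLin e e A := by simp only [T, e, toEuclideanLin_eq_toLin_orthonormal]
  have finrank_eq : Module.finrank 𝕜 K = A.rank := by
    rw [A.rank_eq_finrank_range_toLin e e, ← T_eq]
  have trace_eq : A.trace = ∑ i, ⟪(b i : EuclideanSpace 𝕜 n), T (b i)⟫_𝕜 := by
    rw [← trace_toLin_eq A e, ← T_eq, ← T.trace_restrict_eq_of_forall_mem K T.mem_range_self,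
      LinearMap.trace_eq_sum_inner _ b]
    rfl
  calc ‖A.trace‖ ^ 2
      ≤ (∑ i, ‖⟪(b i : EuclideanSpace 𝕜 n), T (b i)⟫_𝕜‖) ^ 2 := by
        rw [trace_eq]; gcongr; exact norm_sum_le _ _
    _ ≤ (∑ i, ‖T (b i)‖) ^ 2 := by
        gcongr with i
        simpa [hb.1 i] using norm_inner_le_norm (𝕜 := 𝕜) (b i : EuclideanSpace 𝕜 n) (T (b i))
    _ ≤ A.rank * ∑ i, ‖T (b i)‖ ^ 2 := by
        simpa [finrank_eq] using sq_sum_le_card_mul_sum_sq (s := .univ) (f := fun i => ‖T (b i)‖)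
    _ ≤ A.rank * ‖A‖ ^ 2 := by gcongr; exact sum_norm_toEuclideanLin_sq_le A hb

end Frobenius

section Rank

variable {m n ι K : Type*} [Fintype n] [Fintype ι] [Field K]

theorem rank_add_le_rank_add_rank [Finite m] (A B : Matrix m n K) :
    (A + B).rank ≤ A.rank + B.rank := by
  rw [Matrix.rank, Matrix.rank, Matrix.rank, mulVecLin_add]
  exact (Submodule.finrank_mono (LinearMap.range_add_le _ _)).trans
    (Submodule.finrank_add_le_finrank_add_finrank _ _)

theorem rank_single_le [DecidableEq m] [DecidableEq n] (i : m) (j : n) (z : K) :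
    (single i j z).rank ≤ 1 := by
  rw [← mul_one z, ← smul_eq_mul, ← smul_single, single_eq_single_vecMulVec_single,
    ← smul_vecMulVec]
  exact rank_vecMulVec_le _ _

theorem exists_eq_mul_of_rank_le_card [Finite m] {A : Matrix m n K}
    (hA : A.rank ≤ Fintype.card ι) :
    ∃ (B : Matrix m ι K) (C : Matrix ι n K), A = B * C := by
  classical
  have := Fintype.ofFinite m
  let f := A.mulVecLin
  obtain ⟨i, hi⟩ : ∃ i : LinearMap.range f →ₗ[K] (ι → K), Function.Injective i :=
    finrank_le_iff_exists_linearMap.1 (by rwa [Module.finrank_fintype_fun_eq_card])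
  obtain ⟨r, hr⟩ := i.exists_leftInverse_of_injective (LinearMap.ker_eq_bot.2 hi)
  refine ⟨((LinearMap.range f).subtype ∘ₗ r).toMatrix', (i ∘ₗ f.rangeRestrict).toMatrix', ?_⟩
  rw [← LinearMap.toMatrix'_comp, LinearMap.comp_assoc, ← LinearMap.comp_assoc f.rangeRestrict,
    hr, LinearMap.id_comp, LinearMap.subtype_comp_codRestrict]
  exact (LinearMap.toMatrix'_toLin' A).symm

end Rank

section OrthInvForm

open scoped Matrix.Norms.Frobenius

variable {m n : Type*} [Fintype m] [Fintype n]

/-- The quadratic form `c ‖W‖² + p |tr W|² + q tr(W W̄)` on complex matrices, invariant under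
`W ↦ O W Oᵀ` for real orthogonal `O`. At `c = (1 - p - q) / d` and `W = Bᴴ A` it is the expectation
`⟨B| (id ⊗ Lmap d p q)(|A⟩⟨A|) |B⟩`, the rows of `A` and `B` being the blocks of `|A⟩` and `|B⟩`.
The trace of `W W̄` is always real, so taking its real part loses nothing. -/
def orthInvForm (c p q : ℝ) (W : Matrix n n ℂ) : ℝ :=
  c * ‖W‖ ^ 2 + p * ‖W.trace‖ ^ 2 + q * (W * W.map star).trace.re

theorem trace_mul_map_star_eq_ofReal_re (W : Matrix n n ℂ) :
    (W * W.map star).trace = ((W * W.map star).trace.re : ℂ) := by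
  refine (Complex.conj_eq_iff_re.1 ?_).symm
  rw [← conjTranspose_transpose, starRingEnd_apply, ← trace_conjTranspose, conjTranspose_mul,
    ← trace_transpose, transpose_mul, trace_mul_comm]
  simp [conjTranspose_transpose_eq_transpose_conjTranspose]

theorem ofReal_orthInvForm (c p q : ℝ) (W : Matrix n n ℂ) :
    (orthInvForm c p q W : ℂ) = c * (W * Wᴴ).trace + p * (W.trace * star W.trace)
      + q * (W * W.map star).trace := by
  rw [trace_mul_map_star_eq_ofReal_re, trace_mul_conjTranspose_self_eq, RCLike.star_def,
    RCLike.mul_conj, orthInvForm]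
  push_cast
  rfl

theorem norm_add_smul_transpose_sq (s : ℝ) (W : Matrix n n ℂ) :
    ‖W + s • Wᵀ‖ ^ 2 = (1 + s ^ 2) * ‖W‖ ^ 2 + 2 * s * (W * W.map star).trace.re := by
  have cross : (Wᵀ * Wᴴ).trace = (W * W.map star).trace := by
    rw [← conjTranspose_transpose, ← trace_transpose_mul, transpose_transpose]
  have square : (Wᵀ * W.map star).trace = (W * Wᴴ).trace := by
    rw [← conjTranspose_transpose, trace_transpose_mul]
  have expand : ((W + s • Wᵀ) * (W + s • Wᵀ)ᴴ).trace =
      (1 + s ^ 2) * (W * Wᴴ).trace + 2 * s * (W * W.map star).trace := by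
    simp only [conjTranspose_add, conjTranspose_smul, transpose_conjTranspose, Matrix.add_mul,
      Matrix.mul_add, Matrix.smul_mul, Matrix.mul_smul, trace_add, trace_smul, cross, square,
      star_trivial, Complex.real_smul]
    ring
  rw [trace_mul_conjTranspose_self_eq, trace_mul_conjTranspose_self_eq,
    trace_mul_map_star_eq_ofReal_re] at expand
  exact Complex.ofReal_injective (by simpa using expand)

theorem orthInvForm_conjTranspose_mul_self [DecidableEq m] (c p q : ℝ) {a b : ℝ}
    {V : Matrix m n ℂ} (hstar : V * Vᴴ = a • 1) (htr : V * Vᵀ = b • 1) :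
    orthInvForm c p q (Vᴴ * V) =
      Fintype.card m * (c * a ^ 2 + p * (a ^ 2 * Fintype.card m) + q * b ^ 2) := by
  have trace_eq : (Vᴴ * V).trace = a * Fintype.card m := by
    rw [trace_mul_comm, hstar, trace_smul, trace_one, Complex.real_smul]
  have trace_mul_star : (Vᴴ * V * (Vᴴ * V)ᴴ).trace = a ^ 2 * Fintype.card m := by
    rw [conjTranspose_mul, conjTranspose_conjTranspose, Matrix.mul_assoc, trace_mul_comm,
      ← Matrix.mul_assoc, hstar, Matrix.mul_assoc, hstar]
    simp [trace_smul, pow_two, mul_assoc]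
  have map_star_eq : (Vᴴ * V).map star = Vᵀ * (Vᴴ)ᵀ := by
    rw [← conjTranspose_transpose, conjTranspose_mul, conjTranspose_conjTranspose, transpose_mul]
  have trace_mul_map_star : (Vᴴ * V * (Vᴴ * V).map star).trace = b ^ 2 * Fintype.card m := by
    have hconj : (Vᴴ)ᵀ * Vᴴ = b • 1 := by
      rw [← conjTranspose_transpose_eq_transpose_conjTranspose, ← conjTranspose_mul, htr,
        conjTranspose_smul, conjTranspose_one, star_trivial]
    rw [map_star_eq, Matrix.mul_assoc, ← Matrix.mul_assoc V, htr, Matrix.smul_mul, Matrix.one_mul,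
      Matrix.mul_smul, trace_smul, trace_mul_comm, hconj]
    simp [trace_smul, pow_two, mul_assoc]
  apply Complex.ofReal_injective
  rw [ofReal_orthInvForm, trace_mul_star, trace_mul_map_star, trace_eq]
  simp only [star_mul', RCLike.star_def, Complex.conj_ofReal, star_natCast]
  push_cast
  ring

theorem orthInvForm_single_add_smul_single [DecidableEq n] (c p q s : ℝ) {i j : n} (hij : i ≠ j) :
    orthInvForm c p q (single i j 1 + s • single j i 1) = c * (1 + s ^ 2) + 2 * q * s := by
  have hji := hij.symm
  set W : Matrix n n ℂ := single i j 1 + s • single j i 1 with hW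
  have trace_eq : W.trace = 0 := by simp [hW, hij, hji]
  have trace_mul_star : (W * Wᴴ).trace = 1 + s ^ 2 := by
    simp [hW, Matrix.add_mul, Matrix.mul_add, hij, hji, pow_two]
  have trace_mul_map_star : (W * W.map star).trace = 2 * s := by
    have map_star_eq : W.map star = W := by
      rw [← conjTranspose_transpose]
      simp [hW]
    rw [map_star_eq]
    simp [hW, Matrix.add_mul, Matrix.mul_add, hij, hji, two_mul]
  apply Complex.ofReal_injective
  rw [ofReal_orthInvForm, trace_eq, trace_mul_star, trace_mul_map_star]
  push_cast
  ring

theorem exists_mul_conjTranspose_eq_one_and_mul_transpose_eq_one [DecidableEq m]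
    (h : Fintype.card m ≤ Fintype.card n) :
    ∃ V : Matrix m n ℂ, V * Vᴴ = 1 ∧ V * Vᵀ = 1 := by
  classical
  obtain ⟨e⟩ := Function.Embedding.nonempty_of_card_le h
  let V : Matrix m n ℂ := (1 : Matrix n n ℂ).submatrix e id
  have hV : V * (1 : Matrix n n ℂ).submatrix id e = 1 := by
    rw [← submatrix_mul _ _ _ _ _ Function.bijective_id, Matrix.one_mul, submatrix_one_embedding]
  exact ⟨V, by simpa [V] using hV, by simpa [V] using hV⟩

theorem exists_mul_conjTranspose_eq_two_and_mul_transpose_eq_zero [DecidableEq m]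
    (h : 2 * Fintype.card m ≤ Fintype.card n) :
    ∃ V : Matrix m n ℂ, V * Vᴴ = (2 : ℝ) • 1 ∧ V * Vᵀ = 0 := by
  obtain ⟨E, hEstar, hEtr⟩ := exists_mul_conjTranspose_eq_one_and_mul_transpose_eq_one
    (m := m ⊕ m) (n := n) (by simpa [two_mul] using h)
  refine ⟨fromCols (1 : Matrix m m ℂ) (Complex.I • (1 : Matrix m m ℂ)) * E, ?_, ?_⟩
  · rw [conjTranspose_mul, Matrix.mul_assoc, ← Matrix.mul_assoc E, hEstar, Matrix.one_mul,
      conjTranspose_fromCols_eq_fromRows_conjTranspose, fromCols_mul_fromRows]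
    simp [two_smul, smul_smul]
  · rw [transpose_mul, Matrix.mul_assoc, ← Matrix.mul_assoc E, hEtr, Matrix.one_mul,
      transpose_fromCols, fromCols_mul_fromRows]
    simp [smul_smul]

theorem abs_trace_mul_map_star_re_le (W : Matrix n n ℂ) :
    |(W * W.map star).trace.re| ≤ ‖W‖ ^ 2 := by
  have hplus := norm_add_smul_transpose_sq 1 W
  have hminus := norm_add_smul_transpose_sq (-1) W
  rw [abs_le]
  constructor <;>
    linarith [sq_nonneg ‖W + (1 : ℝ) • Wᵀ‖, sq_nonneg ‖W + (-1 : ℝ) • Wᵀ‖]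

theorem norm_trace_sq_le_rank_mul_norm_sq_add (W : Matrix n n ℂ) :
    ‖W.trace‖ ^ 2 ≤ W.rank * (‖W‖ ^ 2 + (W * W.map star).trace.re) := by
  have norm_sq_eq : ‖W + Wᵀ‖ ^ 2 = 2 * (‖W‖ ^ 2 + (W * W.map star).trace.re) := by
    have h := norm_add_smul_transpose_sq 1 W
    rw [one_smul] at h
    linarith
  have trace_eq : ‖(W + Wᵀ).trace‖ ^ 2 = 4 * ‖W.trace‖ ^ 2 := by
    rw [trace_add, trace_transpose, ← two_mul, norm_mul, mul_pow]
    norm_num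
  have rank_le : ((W + Wᵀ).rank : ℝ) ≤ 2 * W.rank := by
    have h := rank_add_le_rank_add_rank W Wᵀ
    rw [rank_transpose, ← two_mul] at h
    exact_mod_cast h
  have key := (norm_trace_sq_le_rank_mul_norm_sq (W + Wᵀ)).trans
    (mul_le_mul_of_nonneg_right rank_le (sq_nonneg _))
  rw [trace_eq, norm_sq_eq] at key
  linarith

theorem orthInvForm_nonneg_of_rank_le {c p q : ℝ} {k : ℕ} (hsymm : 0 ≤ c + q) (hskew : 0 ≤ c - q)
    (hreal : 0 ≤ c + q + k * p) (hisotropic : 0 ≤ c + k * p) {W : Matrix n n ℂ} (hW : W.rank ≤ k) :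
    0 ≤ orthInvForm c p q W := by
  have hWk : (W.rank : ℝ) ≤ k := by exact_mod_cast hW
  have hm := abs_le.1 (abs_trace_mul_map_star_re_le W)
  have trace_le := norm_trace_sq_le_rank_mul_norm_sq W
  have trace_le_add := norm_trace_sq_le_rank_mul_norm_sq_add W
  have ht := sq_nonneg ‖W.trace‖
  unfold orthInvForm
  generalize ‖W‖ ^ 2 = n, ‖W.trace‖ ^ 2 = t, (W * W.map star).trace.re = m at *
  have t_le : t ≤ k * n := trace_le.trans (by gcongr; linarith)
  have t_le_add : t ≤ k * (n + m) := trace_le_add.trans (by gcongr; linarith)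
  rcases le_total 0 p with hp | hp
  · calc 0 ≤ (c + q) * ((n + m) / 2) + (c - q) * ((n - m) / 2) + p * t :=
          add_nonneg (add_nonneg (mul_nonneg hsymm (by linarith)) (mul_nonneg hskew (by linarith)))
            (mul_nonneg hp ht)
      _ = c * n + p * t + q * m := by ring
  rcases le_total 0 m with hm0 | hm0
  · calc 0 ≤ (c + k * p) * (n - m) + (c + q + k * p) * m :=
          add_nonneg (mul_nonneg hisotropic (by linarith)) (mul_nonneg hreal hm0)
      _ = c * n + p * (k * n) + q * m := by ring
      _ ≤ c * n + p * t + q * m := by linarith [mul_le_mul_of_nonpos_left t_le hp]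
  · calc 0 ≤ (c + k * p) * (n + m) + (c - q) * -m :=
          add_nonneg (mul_nonneg hisotropic (by linarith)) (mul_nonneg hskew (by linarith))
      _ = c * n + p * (k * (n + m)) + q * m := by ring
      _ ≤ c * n + p * t + q * m := by linarith [mul_le_mul_of_nonpos_left t_le_add hp]

theorem bounds_of_forall_orthInvForm_nonneg {c p q : ℝ} {k : ℕ} (hk : 2 ≤ k)
    (hkn : 2 * k ≤ Fintype.card n)
    (h : ∀ W : Matrix n n ℂ, W.rank ≤ k → 0 ≤ orthInvForm c p q W) :
    0 ≤ c + q ∧ 0 ≤ c - q ∧ 0 ≤ c + q + k * p ∧ 0 ≤ c + k * p := by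
  classical
  have off_diagonal (s : ℝ) : 0 ≤ c * (1 + s ^ 2) + 2 * q * s := by
    obtain ⟨i, j, hij⟩ := Fintype.exists_pair_of_one_lt_card (α := n) (by lia)
    rw [← orthInvForm_single_add_smul_single c p q s hij]
    refine h _ ((rank_add_le_rank_add_rank _ _).trans ?_)
    rw [smul_single]
    exact (Nat.add_le_add (rank_single_le i j _) (rank_single_le j i _)).trans hk
  have projection {a b : ℝ} {V : Matrix (Fin k) n ℂ} (hstar : V * Vᴴ = a • 1)
      (htr : V * Vᵀ = b • 1) : 0 ≤ c * a ^ 2 + p * (a ^ 2 * k) + q * b ^ 2 := by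
    have rank_le : V.rank ≤ k := V.rank_le_card_height.trans_eq (Fintype.card_fin k)
    have hnonneg := h (Vᴴ * V) ((rank_mul_le_right _ _).trans rank_le)
    rw [orthInvForm_conjTranspose_mul_self c p q hstar htr, Fintype.card_fin] at hnonneg
    exact nonneg_of_mul_nonneg_right hnonneg (by positivity)
  obtain ⟨R, hRstar, hRtr⟩ := exists_mul_conjTranspose_eq_one_and_mul_transpose_eq_one
    (m := Fin k) (n := n) (by rw [Fintype.card_fin]; lia)
  obtain ⟨S, hSstar, hStr⟩ := exists_mul_conjTranspose_eq_two_and_mul_transpose_eq_zero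
    (m := Fin k) (n := n) (by rwa [Fintype.card_fin])
  have real_projection := projection (a := 1) (b := 1) (by simpa using hRstar) (by simpa using hRtr)
  have isotropic_projection := projection (b := 0) hSstar (by simpa using hStr)
  refine ⟨?_, ?_, ?_, ?_⟩ <;> linarith [off_diagonal 1, off_diagonal (-1)]

theorem forall_rank_le_orthInvForm_nonneg_iff {c p q : ℝ} {k : ℕ} (hk : 2 ≤ k)
    (hkn : 2 * k ≤ Fintype.card n) :
    (∀ W : Matrix n n ℂ, W.rank ≤ k → 0 ≤ orthInvForm c p q W) ↔
      0 ≤ c + q ∧ 0 ≤ c - q ∧ 0 ≤ c + q + k * p ∧ 0 ≤ c + k * p :=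
  ⟨bounds_of_forall_orthInvForm_nonneg hk hkn,
    fun ⟨hsymm, hskew, hreal, hisotropic⟩ _ hW =>
      orthInvForm_nonneg_of_rank_le hsymm hskew hreal hisotropic hW⟩

end OrthInvForm

section KPositive

theorem posSemidef_iff_forall_dotProduct_mulVec_nonneg {n : Type*} [Fintype n]
    {A : Matrix n n ℂ} : A.PosSemidef ↔ ∀ x : n → ℂ, 0 ≤ star x ⬝ᵥ (A *ᵥ x) := by
  classical
  refine ⟨fun h x => h.dotProduct_mulVec_nonneg x, fun h => ?_⟩
  rw [← isPositive_toEuclideanLin_iff, LinearMap.isPositive_iff_complex]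
  intro x
  have hx := star_nonneg_iff.2 (h x.ofLp)
  rw [← star_dotProduct_star, star_star, dotProduct_comm, Complex.nonneg_iff] at hx
  simp [Complex.ext_iff, EuclideanSpace.inner_eq_star_dotProduct, ← hx.2, hx.1]

theorem dotProduct_idTensor_vecMulVec_mulVec {k m n : ℕ}
    (L : Matrix (Fin m) (Fin m) ℂ →ₗ[ℂ] Matrix (Fin n) (Fin n) ℂ)
    (A : Fin k → Fin m → ℂ) (B : Fin k → Fin n → ℂ) :
    star B.uncurry ⬝ᵥ (idTensor L (vecMulVec A.uncurry (star A.uncurry)) *ᵥ B.uncurry) =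
      ∑ i, ∑ j, star (B i) ⬝ᵥ (L (vecMulVec (A i) (star (A j))) *ᵥ B j) := by
  have block (i j : Fin k) (a b : Fin n) :
      idTensor L (vecMulVec A.uncurry (star A.uncurry)) (i, a) (j, b) =
        L (vecMulVec (A i) (star (A j))) a b := rfl
  simp only [dotProduct, mulVec, Fintype.sum_prod_type, block, Finset.mul_sum]
  refine Finset.sum_congr rfl fun i _ => ?_
  exact Finset.sum_comm

theorem idTensor_sum {k m n : ℕ} {ι : Type*} (s : Finset ι)
    (L : Matrix (Fin m) (Fin m) ℂ →ₗ[ℂ] Matrix (Fin n) (Fin n) ℂ)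
    (X : ι → Matrix (Fin k × Fin m) (Fin k × Fin m) ℂ) :
    idTensor L (∑ i ∈ s, X i) = ∑ i ∈ s, idTensor L (X i) := by
  ext x y
  have block : (of fun a b => (∑ i ∈ s, X i) (x.1, a) (y.1, b)) =
      ∑ i ∈ s, of fun a b => X i (x.1, a) (y.1, b) := by
    ext a b
    simp [Matrix.sum_apply]
  rw [Matrix.sum_apply]
  simp only [idTensor, of_apply]
  rw [block, map_sum, Matrix.sum_apply]

theorem isKPositive_iff_forall_sum_nonneg {k m n : ℕ}
    {L : Matrix (Fin m) (Fin m) ℂ →ₗ[ℂ] Matrix (Fin n) (Fin n) ℂ} :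
    IsKPositive k L ↔ ∀ (A : Fin k → Fin m → ℂ) (B : Fin k → Fin n → ℂ),
      0 ≤ ∑ i, ∑ j, star (B i) ⬝ᵥ (L (vecMulVec (A i) (star (A j))) *ᵥ B j) := by
  simp only [← dotProduct_idTensor_vecMulVec_mulVec]
  constructor
  · intro h A B
    exact (h _ (posSemidef_vecMulVec_self_star _)).dotProduct_mulVec_nonneg _
  · intro h X hX
    obtain ⟨N, v, rfl⟩ := posSemidef_iff_eq_sum_vecMulVec.1 hX
    rw [idTensor_sum]
    refine posSemidef_sum _ fun l _ => posSemidef_iff_forall_dotProduct_mulVec_nonneg.2 fun x => ?_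
    exact h (Function.curry (v l)) (Function.curry x)

theorem Lmap_vecMulVec (d : ℕ) (p q : ℝ) (u v : Fin d → ℂ) :
    Lmap d p q (vecMulVec u v) = (((1 - p - q) / d : ℝ) : ℂ) • (u ⬝ᵥ v) • 1 +
      (p : ℂ) • vecMulVec u v + (q : ℂ) • vecMulVec v u := by
  simp [Lmap, trace_vecMulVec, transpose_vecMulVec]

theorem dotProduct_Lmap_vecMulVec_mulVec {d : ℕ} (p q : ℝ) (u v x y : Fin d → ℂ) :
    star x ⬝ᵥ (Lmap d p q (vecMulVec u (star v)) *ᵥ y) =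
      ((1 - p - q) / d : ℝ) * ((star v ⬝ᵥ u) * (star x ⬝ᵥ y)) +
        p * ((star x ⬝ᵥ u) * (star v ⬝ᵥ y)) + q * ((y ⬝ᵥ u) * star (x ⬝ᵥ v)) := by
  rw [Lmap_vecMulVec, dotProduct_comm u, dotProduct_comm y, dotProduct_comm x,
    ← star_dotProduct_star]
  simp only [add_mulVec, smul_mulVec, one_mulVec, vecMulVec_mulVec, dotProduct_add,
    dotProduct_smul, smul_eq_mul, MulOpposite.smul_eq_mul_unop, MulOpposite.unop_op]
  ring

theorem sum_dotProduct_Lmap_mulVec {d k : ℕ} (p q : ℝ) (A B : Matrix (Fin k) (Fin d) ℂ) :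
    ∑ i, ∑ j, star (B i) ⬝ᵥ (Lmap d p q (vecMulVec (A i) (star (A j))) *ᵥ B j) =
      orthInvForm ((1 - p - q) / d) p q (Bᴴ * A) := by
  have mul_conjTranspose_eq (X Y : Matrix (Fin k) (Fin d) ℂ) (i j : Fin k) :
      star (Y j) ⬝ᵥ X i = (X * Yᴴ) i j := dotProduct_comm _ _
  have mul_transpose_eq (i j : Fin k) : B j ⬝ᵥ A i = (A * Bᵀ) i j := dotProduct_comm _ _
  have trace_star : (Bᴴ * A * (Bᴴ * A)ᴴ).trace = (A * Aᴴ * (B * Bᴴ)).trace := by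
    rw [conjTranspose_mul, conjTranspose_conjTranspose, Matrix.mul_assoc, trace_mul_comm,
      Matrix.mul_assoc, Matrix.mul_assoc, Matrix.mul_assoc]
  have trace_map_star : (Bᴴ * A * (Bᴴ * A).map star).trace =
      (A * Bᵀ * (A * Bᵀ).map star).trace := by
    have map_star_left : (Bᴴ * A).map star = Bᵀ * A.map star := by
      simp only [← conjTranspose_transpose, conjTranspose_mul, transpose_mul,
        conjTranspose_conjTranspose]
    have map_star_right : (A * Bᵀ).map star = A.map star * Bᴴ := by
      simp only [← conjTranspose_transpose, conjTranspose_mul, transpose_mul,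
        transpose_conjTranspose, transpose_transpose]
    rw [map_star_left, map_star_right, Matrix.mul_assoc, trace_mul_comm]
    simp only [Matrix.mul_assoc]
  have trace_star_eq : star (Bᴴ * A).trace = (B * Aᴴ).trace := by
    rw [← trace_conjTranspose, conjTranspose_mul, conjTranspose_conjTranspose, trace_mul_comm]
  rw [ofReal_orthInvForm, trace_star, trace_map_star, trace_star_eq, trace_mul_comm Bᴴ]
  simp only [dotProduct_Lmap_vecMulVec_mulVec, mul_conjTranspose_eq, mul_transpose_eq,
    Finset.sum_add_distrib, ← Finset.mul_sum, ← Finset.sum_mul]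
  rfl

theorem isKPositive_Lmap_iff {d k : ℕ} {p q : ℝ} :
    IsKPositive k (Lmap d p q) ↔
      ∀ W : Matrix (Fin d) (Fin d) ℂ, W.rank ≤ k → 0 ≤ orthInvForm ((1 - p - q) / d) p q W := by
  rw [isKPositive_iff_forall_sum_nonneg]
  constructor
  · intro h W hW
    obtain ⟨B, A, rfl⟩ := exists_eq_mul_of_rank_le_card (ι := Fin k) (by rwa [Fintype.card_fin])
    have hnonneg := h A Bᴴ
    rwa [sum_dotProduct_Lmap_mulVec, conjTranspose_conjTranspose, Complex.zero_le_real] at hnonneg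
  · intro h A B
    rw [sum_dotProduct_Lmap_mulVec p q A B, Complex.zero_le_real]
    exact h _ ((rank_mul_le_right _ _).trans
      ((rank_le_card_height _).trans_eq (Fintype.card_fin k)))

end KPositive

/-- For `d ≥ 4` and an integer `k` with `1 < k ≤ d/2`, the map
`L^{(d)}_{p,q}` is `k`-positive iff `p - (d-1)q ≤ 1`, `p + (d+1)q ≤ 1`,
`(kd-1)p + (d-1)q ≥ -1` and `q - (kd-1)p ≤ 1`. -/
theorem Lmap_kPositive_iff_small {d k : ℕ} (hd : 4 ≤ d) (hk : 1 < k) (hkd : 2 * k ≤ d)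
    (p q : ℝ) :
    IsKPositive k (Lmap d p q) ↔
      (p - ((d : ℝ) - 1) * q ≤ 1 ∧ p + ((d : ℝ) + 1) * q ≤ 1 ∧
        -1 ≤ ((k : ℝ) * d - 1) * p + ((d : ℝ) - 1) * q ∧
        q - ((k : ℝ) * d - 1) * p ≤ 1) := by
  have hd_pos : (0 : ℝ) < d := by positivity
  obtain ⟨c, hc⟩ : ∃ c, (1 - p - q) / d = c := ⟨_, rfl⟩
  have hcd : c * d = 1 - p - q := by rw [← hc, div_mul_cancel₀ _ hd_pos.ne']
  have scale (x : ℝ) : 0 ≤ x ↔ 0 ≤ x * d := (mul_nonneg_iff_of_pos_right hd_pos).symm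
  rw [isKPositive_Lmap_iff, forall_rank_le_orthInvForm_nonneg_iff hk (by rwa [Fintype.card_fin]),
    hc, scale (c + q), scale (c - q), scale (c + q + k * p), scale (c + k * p)]
  refine and_congr ?_ (and_congr ?_ (and_congr ?_ ?_)) <;> constructor <;> intro h <;> linarith

end
end

section
/- Let d ≥ 2 and p, q ∈ ℝ. The map L^{(d)}_{p,q} is completely positive if and only if p − (d−1)q ≤ 1, p + (d+1)q ≤ 1, and (d+1)p + q ≥ −1/(d−1). -/
open Matrix
open scoped ComplexOrder

noncomputable section

/-!
By Choi's theorem, complete positivity of `L^{(d)}_{p,q}` is positive semidefiniteness of its Choi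
matrix, which is `d • ρ^{(d)}_{p,q}`. The flip `F` is an involution fixing the unit vector `Ω`, so
`ρ^{(d)}_{p,q}` acts as a scalar on the line `ℂΩ`, on the symmetric vectors orthogonal to `Ω`, and
on the antisymmetric vectors. The three inequalities say that these eigenvalues are nonnegative.
-/

section PosSemidef

variable {n 𝕜 : Type*} [RCLike 𝕜] {A : Matrix n n 𝕜} {c : 𝕜}

lemma nonneg_of_posSemidef_of_mulVec_eq_smul [Fintype n] (hA : A.PosSemidef) {v : n → 𝕜}
    (hv : v ≠ 0) (h : A *ᵥ v = c • v) : 0 ≤ c := by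
  have hquad : 0 ≤ c * (star v ⬝ᵥ v) := by
    simpa only [h, dotProduct_smul, smul_eq_mul] using hA.dotProduct_mulVec_nonneg v
  exact le_of_mul_le_mul_right (by rwa [zero_mul]) (dotProduct_star_self_pos_iff.mpr hv)

lemma posSemidef_smul_iff (hc : 0 < c) : (c • A).PosSemidef ↔ A.PosSemidef := by
  refine ⟨fun h => ?_, fun h => h.smul hc.le⟩
  simpa only [inv_smul_smul₀ hc.ne'] using h.smul (inv_pos_of_pos hc).le

end PosSemidef

lemma isStarProjection_vecMulVec_star {n R : Type*} [Fintype n] [Semiring R] [StarRing R]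
    {v : n → R} (hv : star v ⬝ᵥ v = 1) : IsStarProjection (vecMulVec v (star v)) where
  isIdempotentElem := by
    rw [IsIdempotentElem, vecMulVec_mul_vecMulVec, hv, one_smul]
  isSelfAdjoint := by
    rw [IsSelfAdjoint, star_eq_conjTranspose, conjTranspose_vecMulVec, star_star]

section Involution

variable {𝕜 A : Type*} [Field 𝕜] [StarRing 𝕜] [NeZero (2 : 𝕜)] [Ring A] [StarRing A] [Algebra 𝕜 A]
  [StarModule 𝕜 A]

variable (𝕜) in
lemma isStarProjection_half_smul_one_add {u : A} (hu : IsSelfAdjoint u) (huu : u * u = 1) :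
    IsStarProjection ((2⁻¹ : 𝕜) • (1 + u)) where
  isIdempotentElem := by
    have hsq : (1 + u) * (1 + u) = (2 : 𝕜) • (1 + u) := by
      rw [add_mul, mul_add, mul_add, huu, one_mul, mul_one, one_mul]
      module
    rw [IsIdempotentElem, smul_mul_smul_comm, hsq, smul_smul, mul_assoc,
      inv_mul_cancel₀ two_ne_zero, mul_one]
  isSelfAdjoint := by
    have htwo : IsSelfAdjoint (2⁻¹ : 𝕜) := (IsSelfAdjoint.ofNat 2).inv₀
    exact htwo.smul ((IsSelfAdjoint.one A).add hu)

end Involution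

open scoped MatrixOrder in
lemma posSemidef_smul_one_add_smul_projection_add_smul_involution {n 𝕜 : Type*} [Fintype n]
    [DecidableEq n] [RCLike 𝕜] {P F : Matrix n n 𝕜} (hP : IsStarProjection P)
    (hF : IsSelfAdjoint F) (hFF : F * F = 1) (hPF : P * F = P) {a b c : 𝕜}
    (hP_nonneg : 0 ≤ a + b + c) (hsymm : 0 ≤ a + c) (hanti : 0 ≤ a - c) :
    (a • 1 + b • P + c • F).PosSemidef := by
  have hS := isStarProjection_half_smul_one_add 𝕜 hF hFF
  have hA := isStarProjection_half_smul_one_add 𝕜 hF.neg (by rw [neg_mul_neg, hFF])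
  have hPS : P * ((2⁻¹ : 𝕜) • (1 + F)) = P := by
    rw [mul_smul_comm, mul_add, mul_one, hPF]
    module
  have hspectral : a • 1 + b • P + c • F = (a + b + c) • P
      + (a + c) • ((2⁻¹ : 𝕜) • (1 + F) - P) + (a - c) • ((2⁻¹ : 𝕜) • (1 + -F)) := by
    module
  rw [hspectral]
  exact ((hP.nonneg.posSemidef.smul hP_nonneg).add
    ((le_iff.mp (hP.le_of_mul_eq_left hS hPS)).smul hsymm)).add (hA.nonneg.posSemidef.smul hanti)

section Choi

variable {k m n : ℕ} (L : Matrix (Fin m) (Fin m) ℂ →ₗ[ℂ] Matrix (Fin n) (Fin n) ℂ)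

/-- The Choi matrix `∑ i j, E i j ⊗ L (E i j)` of `L`, without the normalization `1 / m`. -/
def choiMatrix : Matrix (Fin m × Fin n) (Fin m × Fin n) ℂ :=
  Matrix.of fun x y => L (single x.1 y.1 1) x.2 y.2

lemma choiMatrix_add (L M : Matrix (Fin m) (Fin m) ℂ →ₗ[ℂ] Matrix (Fin n) (Fin n) ℂ) :
    choiMatrix (L + M) = choiMatrix L + choiMatrix M :=
  rfl

lemma choiMatrix_smul (c : ℂ) : choiMatrix (c • L) = c • choiMatrix L :=
  rfl

lemma choiMatrix_id :
    choiMatrix (LinearMap.id : Matrix (Fin m) (Fin m) ℂ →ₗ[ℂ] _) =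
      vecMulVec (vec 1) (star (vec 1)) := by
  ext x y
  by_cases hx : x.1 = x.2 <;> by_cases hy : y.1 = y.2 <;>
    simp [choiMatrix, vecMulVec_apply, one_apply, hx, hy, eq_comm]

open scoped Kronecker in
lemma choiMatrix_trace_smulRight (B : Matrix (Fin n) (Fin n) ℂ) :
    choiMatrix ((traceLinearMap (Fin m) ℂ ℂ).smulRight B) = 1 ⊗ₖ B := by
  ext x y
  by_cases hxy : x.1 = y.1 <;> simp [choiMatrix, one_apply, hxy]

lemma idTensor_vecMulVec_vec_one :
    idTensor L (vecMulVec (vec 1) (star (vec 1))) = choiMatrix L := by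
  rw [← choiMatrix_id]
  rfl

lemma idTensor_apply_eq_sum_choiMatrix (X : Matrix (Fin k × Fin m) (Fin k × Fin m) ℂ)
    (x y : Fin k × Fin n) :
    idTensor L X x y = ∑ c, ∑ e, X (x.1, c) (y.1, e) * choiMatrix L (c, x.2) (e, y.2) := by
  rw [idTensor, of_apply, matrix_eq_sum_single (Matrix.of _)]
  have hsingle (c e : Fin m) (z : ℂ) : L (single c e z) = z • L (single c e 1) := by
    rw [← map_smul, smul_single, smul_eq_mul, mul_one]
  simp_rw [map_sum, Matrix.sum_apply, of_apply]
  refine Finset.sum_congr rfl fun c _ => Finset.sum_congr rfl fun e _ => ?_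
  rw [hsingle, Matrix.smul_apply, smul_eq_mul, choiMatrix, of_apply]

/-- The map `id_k ⊗ ⟨ω| ⊗ id_n` contracting the two middle factors of `(k ⊗ m) ⊗ (m ⊗ n)`
against the unnormalized `|ω⟩ = ∑ c, |cc⟩`; it recovers `idTensor L X` from `X` and the Choi matrix
of `L`. -/
def middleContraction (k m n : ℕ) : Matrix (Fin k × Fin n) ((Fin k × Fin m) × (Fin m × Fin n)) ℂ :=
  Matrix.of fun x z => if z.1.1 = x.1 ∧ z.2.2 = x.2 ∧ z.1.2 = z.2.1 then 1 else 0

open scoped Kronecker in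
lemma idTensor_eq_middleContraction_mul_kronecker_mul
    (X : Matrix (Fin k × Fin m) (Fin k × Fin m) ℂ) :
    idTensor L X = middleContraction k m n * (X ⊗ₖ choiMatrix L) * (middleContraction k m n)ᴴ := by
  ext x y
  rw [idTensor_apply_eq_sum_choiMatrix, Finset.sum_comm]
  simp [middleContraction, mul_apply, Fintype.sum_prod_type, ite_and, apply_ite,
    Finset.sum_ite_irrel]

variable {L}

lemma choiMatrix_posSemidef_of_isKPositive (hL : IsKPositive m L) : (choiMatrix L).PosSemidef :=
  idTensor_vecMulVec_vec_one L ▸ hL _ (posSemidef_vecMulVec_self_star _)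

lemma isKPositive_of_choiMatrix_posSemidef (hL : (choiMatrix L).PosSemidef) (k : ℕ) :
    IsKPositive k L := fun X hX => by
  rw [idTensor_eq_middleContraction_mul_kronecker_mul]
  exact (hX.kronecker hL).mul_mul_conjTranspose_same _

theorem forall_isKPositive_iff_choiMatrix_posSemidef :
    (∀ k, IsKPositive k L) ↔ (choiMatrix L).PosSemidef :=
  ⟨fun hL => choiMatrix_posSemidef_of_isKPositive (hL m), isKPositive_of_choiMatrix_posSemidef⟩

end Choi

section Rho

variable {d : ℕ}

lemma omegaVec_eq_smul_vec_one : omegaVec d = ((1 / √d : ℝ) : ℂ) • vec 1 := by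
  ext ⟨i, j⟩
  simp only [omegaVec, Pi.smul_apply, vec, one_apply, smul_eq_mul, mul_ite, mul_one, mul_zero,
    eq_comm]

lemma vecMulVec_omegaVec_star :
    vecMulVec (omegaVec d) (star (omegaVec d)) =
      (1 / d : ℂ) • vecMulVec (vec 1) (star (vec 1)) := by
  have hsq : ((1 / √d : ℝ) : ℂ) * ((1 / √d : ℝ) : ℂ) = 1 / d := by
    rw [← Complex.ofReal_mul, div_mul_div_comm, one_mul, Real.mul_self_sqrt d.cast_nonneg]
    push_cast
    rfl
  rw [omegaVec_eq_smul_vec_one, star_smul, smul_vecMulVec, vecMulVec_smul, smul_smul,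
    Complex.star_def, Complex.conj_ofReal, hsq]

lemma vecMulVec_omegaVec_star_mulVec_vec (A : Matrix (Fin d) (Fin d) ℂ) :
    vecMulVec (omegaVec d) (star (omegaVec d)) *ᵥ vec A = (A.trace / d) • vec 1 := by
  rw [vecMulVec_omegaVec_star, smul_mulVec, vecMulVec_mulVec, star_vec_dotProduct_vec,
    conjTranspose_one, one_mul, op_smul_eq_smul, smul_smul, one_div_mul_eq_div]

lemma star_omegaVec_dotProduct_self (hd : d ≠ 0) : star (omegaVec d) ⬝ᵥ omegaVec d = 1 := by
  rw [dotProduct_comm, ← trace_vecMulVec, vecMulVec_omegaVec_star, trace_smul, trace_vecMulVec,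
    dotProduct_comm, star_vec_dotProduct_vec, conjTranspose_one, one_mul, trace_one,
    Fintype.card_fin, smul_eq_mul, one_div_mul_cancel (Nat.cast_ne_zero.mpr hd)]

lemma flipMatrix_eq_permMatrix :
    flipMatrix d = Equiv.Perm.permMatrix ℂ (Equiv.prodComm (Fin d) (Fin d)) := by
  ext x y
  simp [flipMatrix, Equiv.toPEquiv_apply, PEquiv.toMatrix_apply, Prod.ext_iff, and_comm, eq_comm]

lemma flipMatrix_mulVec_vec (A : Matrix (Fin d) (Fin d) ℂ) :
    flipMatrix d *ᵥ vec A = vec Aᵀ := by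
  rw [flipMatrix_eq_permMatrix, permMatrix_mulVec, vec_transpose]
  rfl

lemma isSelfAdjoint_flipMatrix : IsSelfAdjoint (flipMatrix d) := by
  rw [IsSelfAdjoint, star_eq_conjTranspose, flipMatrix_eq_permMatrix, conjTranspose_permMatrix]
  rfl

lemma flipMatrix_mul_self : flipMatrix d * flipMatrix d = 1 := by
  rw [flipMatrix_eq_permMatrix, ← permMatrix_mul]
  exact permMatrix_one

lemma star_omegaVec_vecMul_flipMatrix : star (omegaVec d) ᵥ* flipMatrix d = star (omegaVec d) := by
  rw [flipMatrix_eq_permMatrix, vecMul_permMatrix]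
  ext x
  simp [omegaVec, eq_comm]

lemma rho_mulVec_vec (a b : ℝ) (A : Matrix (Fin d) (Fin d) ℂ) :
    rho d a b *ᵥ vec A = vec ((((1 - a - b : ℝ) : ℂ) / d ^ 2) • A
      + (a * (A.trace / d) : ℂ) • 1 + ((b : ℂ) / d) • Aᵀ) := by
  simp only [rho, add_mulVec, smul_mulVec, one_mulVec, vecMulVec_omegaVec_star_mulVec_vec,
    flipMatrix_mulVec_vec, vec_add, vec_smul, smul_smul]

lemma nonneg_of_rho_posSemidef {a b μ : ℝ} (hρ : (rho d a b).PosSemidef)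
    {A : Matrix (Fin d) (Fin d) ℂ} (hA : A ≠ 0)
    (hμ : (((1 - a - b : ℝ) : ℂ) / d ^ 2) • A + (a * (A.trace / d) : ℂ) • 1 + ((b : ℂ) / d) • Aᵀ =
      (μ : ℂ) • A) : 0 ≤ μ := by
  refine Complex.zero_le_real.mp
    (nonneg_of_posSemidef_of_mulVec_eq_smul hρ (mt vec_eq_zero_iff.mp hA) ?_)
  rw [rho_mulVec_vec, hμ, vec_smul]

lemma eigenvalues_nonneg_of_rho_posSemidef (hd : 2 ≤ d) {a b : ℝ} (hρ : (rho d a b).PosSemidef) :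
    0 ≤ (1 - a - b) / d ^ 2 + b / d ∧
      0 ≤ (1 - a - b) / d ^ 2 - b / d ∧ 0 ≤ (1 - a - b) / d ^ 2 + a + b / d := by
  have : Nontrivial (Fin d) := Fin.nontrivial_iff_two_le.mpr hd
  obtain ⟨i, j, hij⟩ := exists_pair_ne (Fin d)
  have hd0 : (d : ℂ) ≠ 0 := Nat.cast_ne_zero.mpr (by lia)
  refine ⟨nonneg_of_rho_posSemidef (A := single i j 1 + single j i 1) hρ ?_ ?_,
    nonneg_of_rho_posSemidef (A := single i j 1 - single j i 1) hρ ?_ ?_,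
    nonneg_of_rho_posSemidef hρ one_ne_zero ?_⟩
  · intro h
    simpa [hij] using congr_fun₂ h i j
  · rw [trace_add, trace_single_eq_of_ne _ _ _ hij, trace_single_eq_of_ne _ _ _ hij.symm,
      transpose_add, transpose_single, transpose_single]
    push_cast
    module
  · intro h
    simpa [hij] using congr_fun₂ h i j
  · rw [trace_sub, trace_single_eq_of_ne _ _ _ hij, trace_single_eq_of_ne _ _ _ hij.symm,
      transpose_sub, transpose_single, transpose_single]
    push_cast
    module
  · rw [trace_one, transpose_one, Fintype.card_fin, div_self hd0]
    push_cast
    module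

theorem rho_posSemidef_iff (hd : 2 ≤ d) (a b : ℝ) :
    (rho d a b).PosSemidef ↔ 0 ≤ (1 - a - b) / d ^ 2 + b / d ∧
      0 ≤ (1 - a - b) / d ^ 2 - b / d ∧ 0 ≤ (1 - a - b) / d ^ 2 + a + b / d := by
  refine ⟨eigenvalues_nonneg_of_rho_posSemidef hd, fun ⟨hsymm, hanti, hΩ⟩ => ?_⟩
  refine posSemidef_smul_one_add_smul_projection_add_smul_involution
    (isStarProjection_vecMulVec_star (star_omegaVec_dotProduct_self (by lia)))
    isSelfAdjoint_flipMatrix flipMatrix_mul_self ?_ ?_ ?_ ?_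
  · rw [vecMulVec_mul, star_omegaVec_vecMul_flipMatrix]
  · exact_mod_cast hΩ
  · exact_mod_cast hsymm
  · exact_mod_cast hanti

lemma choiMatrix_transpose :
    choiMatrix (transposeLinearEquiv (Fin d) (Fin d) ℂ ℂ).toLinearMap = flipMatrix d := by
  ext x y
  simp [choiMatrix, flipMatrix, single_apply, eq_comm]

lemma choiMatrix_Lmap (hd : d ≠ 0) (p q : ℝ) :
    choiMatrix (Lmap d p q) = (d : ℂ) • rho d p q := by
  have hd0 : (d : ℂ) ≠ 0 := Nat.cast_ne_zero.mpr hd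
  simp only [Lmap, rho, choiMatrix_add, choiMatrix_smul, choiMatrix_trace_smulRight, choiMatrix_id,
    choiMatrix_transpose, one_kronecker_one, vecMulVec_omegaVec_star]
  match_scalars <;> field_simp

end Rho

/-- For `d ≥ 2`, the map `L^{(d)}_{p,q}` is completely positive
(i.e. `k`-positive for every `k`) iff `p - (d-1)q ≤ 1`, `p + (d+1)q ≤ 1` and
`(d+1)p + q ≥ -1/(d-1)`. -/
theorem Lmap_completelyPositive_iff {d : ℕ} (hd : 2 ≤ d) (p q : ℝ) :
    (∀ k : ℕ, IsKPositive k (Lmap d p q)) ↔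
      (p - ((d : ℝ) - 1) * q ≤ 1 ∧ p + ((d : ℝ) + 1) * q ≤ 1 ∧
        -(1 / ((d : ℝ) - 1)) ≤ ((d : ℝ) + 1) * p + q) := by
  have hd1 : (1 : ℝ) < d := by exact_mod_cast hd
  have hd0 : (0 : ℝ) < d := one_pos.trans hd1
  rw [forall_isKPositive_iff_choiMatrix_posSemidef, choiMatrix_Lmap (by lia),
    posSemidef_smul_iff (by exact_mod_cast hd0), rho_posSemidef_iff hd]
  have hsymm : (1 - p - q) / d ^ 2 + q / d = (1 - (p - (d - 1) * q)) / d ^ 2 := by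
    field_simp
    ring
  have hanti : (1 - p - q) / d ^ 2 - q / d = (1 - (p + (d + 1) * q)) / d ^ 2 := by
    field_simp
    ring
  have hΩ : (1 - p - q) / d ^ 2 + p + q / d =
      ((d + 1) * p + q - -(1 / (d - 1))) * ((d - 1) / d ^ 2) := by
    field_simp [(sub_pos.mpr hd1).ne']
    ring
  have hd_sq : (0 : ℝ) < d ^ 2 := by positivity
  rw [hsymm, hanti, hΩ, le_div_iff₀ hd_sq, le_div_iff₀ hd_sq, zero_mul,
    mul_nonneg_iff_of_pos_right (div_pos (sub_pos.mpr hd1) hd_sq), sub_nonneg, sub_nonneg,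
    sub_nonneg]

end
end
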